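/- arXiv:2603.02044 — 5 statements merged into one kernel-verified Lean document; each statement's English description precedes it below -/
import Mathlib

section
/- Let a, b > 0 and let f : ℝ → ℝ belong to L^2_{∞,∞}. If |f(t)| ≤ a for all t ∈ ℝ and |f''(t)| ≤ b for almost every t ∈ ℝ, then |f'(t)| ≤ √(2ab) for all t ∈ ℝ. -/
open MeasureTheory Filter

noncomputable section

/-- The uniform norm `‖f‖ = sup_{t ∈ ℝ} |f t|` of a function `f : ℝ → ℝ`. -/
def unif (f : ℝ → ℝ) : ℝ := ⨆ t : ℝ, |f t|

/-- `M k f = ‖f⁽ᵏ⁾‖`, the uniform norm of the `k`-th derivative of `f`. -/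
def M (k : ℕ) (f : ℝ → ℝ) : ℝ := unif (iteratedDeriv k f)

/-- The class `L^r_{∞,∞}`: bounded functions `f : ℝ → ℝ` having `r-1` (continuous)
derivatives, with `f⁽ʳ⁻¹⁾` locally absolutely continuous and `f⁽ʳ⁾` essentially bounded;
the last two conditions are equivalent to `f⁽ʳ⁻¹⁾` being Lipschitz. -/
def MemL (r : ℕ) (f : ℝ → ℝ) : Prop :=
  Continuous f ∧ (∃ C : ℝ, ∀ t : ℝ, |f t| ≤ C) ∧ ContDiff ℝ (r - 1 : ℕ) f ∧
    ∃ K : NNReal, LipschitzWith K (iteratedDeriv (r - 1) f)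

/-- The Euler perfect spline `φ_r`: the `r`-th `2π`-periodic antiderivative with zero
mean value of `t ↦ sgn (sin t)`. -/
def eulerPhi : ℕ → ℝ → ℝ
  | 0 => fun t => Real.sign (Real.sin t)
  | (s + 1) => fun t =>
      (∫ x in (0:ℝ)..t, eulerPhi s x) -
        (1 / (2 * Real.pi)) * ∫ x in (0:ℝ)..(2 * Real.pi), ∫ u in (0:ℝ)..x, eulerPhi s u

/-- `φ_{λ,r}(t) = λ^{-r} φ_r (λ t)`. -/
def eulerPhiL (lam : ℝ) (r : ℕ) (t : ℝ) : ℝ := lam ^ (-(r : ℤ)) * eulerPhi r (lam * t)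

/-- The basic step function: `0` on `[0,a]`, `1` on `(a, a+b]`, `0` after `a+b`. -/
def psiBase (a b : ℝ) (t : ℝ) : ℝ := if t ≤ a then 0 else if t ≤ a + b then 1 else 0

/-- `psiBase` continued evenly with respect to the point `a+b+c`. -/
def psiHalf (a b c t : ℝ) : ℝ :=
  if t ≤ a + b + c then psiBase a b t else psiBase a b (2 * (a + b + c) - t)

/-- The Rodov step function `ψ_0(a,b,c)`: equal to `psiBase` on `[0, a+b+c]`, continued
evenly with respect to `a+b+c`, then oddly with respect to `2(a+b+c)`, then
`4(a+b+c)`-periodically. -/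
def psiZero (a b c t : ℝ) : ℝ :=
  if (t - 4 * (a + b + c) * ⌊t / (4 * (a + b + c))⌋) ≤ 2 * (a + b + c) then
    psiHalf a b c (t - 4 * (a + b + c) * ⌊t / (4 * (a + b + c))⌋)
  else
    -psiHalf a b c (4 * (a + b + c) - (t - 4 * (a + b + c) * ⌊t / (4 * (a + b + c))⌋))

/-- `ψ_s(a,b,c)`: the `s`-th periodic antiderivative of `ψ_0(a,b,c)` with zero mean
value over the period `[0, 4(a+b+c)]`. -/
def psi : ℕ → ℝ → ℝ → ℝ → ℝ → ℝ
  | 0 => psiZero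
  | (s + 1) => fun a b c t =>
      (∫ x in (0:ℝ)..t, psi s a b c x) -
        (1 / (4 * (a + b + c))) *
          ∫ x in (0:ℝ)..(4 * (a + b + c)), ∫ u in (0:ℝ)..x, psi s a b c u

/-- The modulus of continuity `ω(D^k, X; δ) = sup {‖f⁽ᵏ⁾‖ : f ∈ X, ‖f‖ ≤ δ}` of the
differentiation operator `D^k` on a class `X`. -/
def omegaMod (k : ℕ) (X : Set (ℝ → ℝ)) (δ : ℝ) : ℝ :=
  sSup {y : ℝ | ∃ f ∈ X, M 0 f ≤ δ ∧ M k f = y}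

end

/-- **Landau's inequality.** If `a, b > 0`, `f ∈ L²_{∞,∞}`, `|f t| ≤ a` for all `t`
and `|f'' t| ≤ b` for a.e. `t`, then `|f' t| ≤ √(2ab)` for all `t`. -/
theorem stmt0 (a b : ℝ) (ha : 0 < a) (hb : 0 < b) (f : ℝ → ℝ) (hf : MemL 2 f)
    (h0 : ∀ t : ℝ, |f t| ≤ a)
    (h2 : ∀ᵐ t : ℝ ∂MeasureTheory.volume, |iteratedDeriv 2 f t| ≤ b) :
    ∀ t : ℝ, |deriv f t| ≤ Real.sqrt (2 * a * b) := by
  obtain ⟨-, -, hC, K, hK⟩ := hf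
  have hC1 : ContDiff ℝ 1 f := by simpa using hC
  have hK1 : LipschitzWith K (deriv f) := by simpa [iteratedDeriv_one] using hK
  have hd : ∀ x, HasDerivAt f (deriv f x) x := fun x =>
    (hC1.differentiable (by norm_num) x).hasDerivAt
  have h2' : ∀ᵐ t : ℝ ∂MeasureTheory.volume, ‖deriv (deriv f) t‖ ≤ b := by
    filter_upwards [h2] with t ht
    rw [iteratedDeriv_succ, iteratedDeriv_one] at ht
    exact ht
  have hlip : ∀ x y, |deriv f y - deriv f x| ≤ b * |y - x| := by
    intro x y
    have hac : AbsolutelyContinuousOnInterval (deriv f) x y :=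
      (hK1.lipschitzOnWith (s := Set.uIcc x y)).absolutelyContinuousOnInterval
    rw [← hac.integral_deriv_eq_sub]
    exact intervalIntegral.norm_integral_le_of_norm_le_const_ae
      (by filter_upwards [h2'] with t ht _ using ht)
  intro t
  set c := deriv f t with hc
  have key : ∀ h : ℝ, 0 ≤ h → |f (t + h) - f (t - h) - 2 * h * c| ≤ b * h ^ 2 := by
    intro h hh
    have hg : ∀ x, HasDerivAt (fun h => f (t + h) - f (t - h) - 2 * h * c)
        (deriv f (t + x) + deriv f (t - x) - 2 * c) x := by
      intro x
      have e1 := (hd (t + x)).comp_const_add t x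
      have e2 := (hd (t - x)).comp_const_sub t x
      have e3 := ((hasDerivAt_id x).const_mul (2:ℝ)).mul_const c
      exact ((e1.sub e2).sub e3).congr_deriv (by ring)
    have hB : ∀ x, HasDerivAt (fun x => b * x ^ 2) (2 * b * x) x := by
      intro x
      exact ((hasDerivAt_pow 2 x).const_mul b).congr_deriv (by push_cast; ring)
    refine image_norm_le_of_norm_deriv_right_le_deriv_boundary (a := 0) (b := h)
      (fun x _ => (hg x).continuousAt.continuousWithinAt)
      (fun x _ => (hg x).hasDerivWithinAt) ?_ hB ?_ (Set.right_mem_Icc.2 hh)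
    · simp
    · intro x hx
      have l1 := hlip t (t + x)
      have l2 := hlip t (t - x)
      have e1 : |t + x - t| = x := by rw [add_sub_cancel_left, abs_of_nonneg hx.1]
      have e2 : |t - x - t| = x := by
        rw [sub_sub_cancel_left, abs_neg, abs_of_nonneg hx.1]
      rw [e1, abs_le] at l1
      rw [e2, abs_le] at l2
      rw [Real.norm_eq_abs, abs_le]
      constructor <;> linarith [l1.1, l1.2, l2.1, l2.2]
  apply Real.le_sqrt_of_sq_le
  have k := key (|c| / b) (by positivity)
  have u1 := abs_le.1 (h0 (t + |c| / b))
  have u2 := abs_le.1 (h0 (t - |c| / b))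
  have k1 := abs_le.1 k
  have e : b * (|c| / b) ^ 2 = |c| ^ 2 / b := by field_simp
  have m : |c| ^ 2 / b ≤ 2 * a := by
    rcases abs_cases c with ⟨h, -⟩ | ⟨h, -⟩
    · have e4 : 2 * (|c| / b) * c = 2 * (|c| ^ 2 / b) := by rw [h]; ring
      linarith [k1.1, k1.2]
    · have e4 : 2 * (|c| / b) * c = - (2 * (|c| ^ 2 / b)) := by rw [h]; ring
      linarith [k1.1, k1.2]
  rwa [div_le_iff₀ hb] at m
end

section
/- The constant √2 in Landau's inequality cannot be decreased: for every C < √2 there exists a function f ∈ L^2_{∞,∞} with M_2(f) > 0 such that M_1(f) > C · M_0(f)^{1/2} · M_2(f)^{1/2}. -/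
open MeasureTheory Filter

theorem hq (t : ℝ) : HasDerivAt (fun x : ℝ => x * |x|) (2 * |t|) t := by
  rcases lt_trichotomy t 0 with h | h | h
  · have h1 : HasDerivAt (fun x : ℝ => -(x ^ 2)) (2 * |t|) t := by
      have := (hasDerivAt_pow 2 t).neg
      rw [abs_of_neg h]
      exact this.congr_deriv (by simp)
    refine h1.congr_of_eventuallyEq ?_
    filter_upwards [Iio_mem_nhds h] with x hx
    rw [abs_of_neg hx]; ring
  · subst h
    rw [hasDerivAt_iff_tendsto_slope]
    have h1 : Tendsto (fun x : ℝ => |x|) (nhdsWithin 0 {0}ᶜ) (nhds (2 * |(0:ℝ)|)) := by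
      have : Tendsto (fun x : ℝ => |x|) (nhds 0) (nhds |(0:ℝ)|) := continuous_abs.tendsto 0
      simpa using this.mono_left nhdsWithin_le_nhds
    refine h1.congr' ?_
    filter_upwards [self_mem_nhdsWithin] with x hx
    have : x ≠ 0 := hx
    simp [slope_def_field]
    field_simp
  · have h1 : HasDerivAt (fun x : ℝ => x ^ 2) (2 * |t|) t := by
      have := hasDerivAt_pow 2 t
      rw [abs_of_pos h]
      exact this.congr_deriv (by simp)
    refine h1.congr_of_eventuallyEq ?_
    filter_upwards [Ioi_mem_nhds h] with x hx
    rw [abs_of_pos hx]; ring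

noncomputable def ff (t : ℝ) : ℝ := ((t+1) * |t+1| + (t-1) * |t-1| - 2 * (t * |t|)) / 4

noncomputable def gg (t : ℝ) : ℝ := (|t+1| + |t-1| - 2 * |t|) / 2

theorem ff_deriv (t : ℝ) : HasDerivAt ff (gg t) t := by
  have h1 := (hq (t+1)).comp_add_const t 1
  have h2 := (hq (t-1)).comp_sub_const t 1
  have h3 := (hq t).const_mul 2
  have h := ((h1.add h2).sub h3).div_const 4
  exact h.congr_deriv (by unfold gg; ring)

theorem deriv_ff : deriv ff = gg := funext fun t => (ff_deriv t).deriv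

theorem ff_bound (t : ℝ) : |ff t| ≤ 1/2 := by
  unfold ff
  rw [abs_le]
  rcases abs_cases (t+1) with ⟨h1, h1'⟩ | ⟨h1, h1'⟩ <;>
  rcases abs_cases (t-1) with ⟨h2, h2'⟩ | ⟨h2, h2'⟩ <;>
  rcases abs_cases t with ⟨h3, h3'⟩ | ⟨h3, h3'⟩ <;>
  rw [h1, h2, h3] <;> constructor <;> nlinarith

theorem gg_lip : LipschitzWith 1 gg := by
  refine LipschitzWith.of_dist_le_mul fun x y => ?_
  rw [Real.dist_eq, Real.dist_eq]
  have key : ∀ x y : ℝ, x ≤ y → |gg x - gg y| ≤ y - x := by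
    intro x y hxy
    unfold gg
    rw [abs_le]
    constructor <;>
    rcases abs_cases (x+1) with ⟨h1, h1'⟩ | ⟨h1, h1'⟩ <;>
    rcases abs_cases (x-1) with ⟨h2, h2'⟩ | ⟨h2, h2'⟩ <;>
    rcases abs_cases x with ⟨h3, h3'⟩ | ⟨h3, h3'⟩ <;>
    rcases abs_cases (y+1) with ⟨h4, h4'⟩ | ⟨h4, h4'⟩ <;>
    rcases abs_cases (y-1) with ⟨h5, h5'⟩ | ⟨h5, h5'⟩ <;>
    rcases abs_cases y with ⟨h6, h6'⟩ | ⟨h6, h6'⟩ <;>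
    linarith
  simp only [NNReal.coe_one, one_mul]
  rcases le_total x y with h | h
  · rw [abs_sub_comm x y]
    exact (key x y h).trans (le_abs_self _)
  · rw [abs_sub_comm (gg x)]
    exact (key y x h).trans (le_abs_self _)

theorem gg_bound (t : ℝ) : |gg t| ≤ 1 := by
  unfold gg
  rw [abs_le]
  rcases abs_cases (t+1) with ⟨h1, h1'⟩ | ⟨h1, h1'⟩ <;>
  rcases abs_cases (t-1) with ⟨h2, h2'⟩ | ⟨h2, h2'⟩ <;>
  rcases abs_cases t with ⟨h3, h3'⟩ | ⟨h3, h3'⟩ <;>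
  constructor <;> linarith

theorem dgg_bound (t : ℝ) : |deriv gg t| ≤ 1 := by
  simpa using norm_deriv_le_of_lipschitz (x₀ := t) gg_lip

theorem dgg_half : deriv gg (-1/2) = 1 := by
  have h : HasDerivAt (fun x : ℝ => x + 1) 1 (-1/2) := (hasDerivAt_id _).add_const 1
  refine HasDerivAt.deriv (h.congr_of_eventuallyEq ?_)
  filter_upwards [Ioo_mem_nhds (show (-1:ℝ) < -1/2 by norm_num) (show (-1/2:ℝ) < 0 by norm_num)]
    with x hx
  obtain ⟨h1, h2⟩ := hx
  unfold gg
  rw [abs_of_pos (by linarith), abs_of_neg (by linarith), abs_of_neg h2]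
  ring

/-- The constant `√2` in Landau's inequality cannot be decreased. -/
theorem stmt1 (C : ℝ) (hC : C < Real.sqrt 2) :
    ∃ f : ℝ → ℝ, MemL 2 f ∧ 0 < M 2 f ∧
      C * (M 0 f) ^ ((1:ℝ)/2) * (M 2 f) ^ ((1:ℝ)/2) < M 1 f := by
  have e2 : iteratedDeriv 2 ff = deriv gg := by
    rw [iteratedDeriv_succ, iteratedDeriv_one, deriv_ff]
  have e1 : iteratedDeriv 1 ff = gg := by rw [iteratedDeriv_one, deriv_ff]
  have m0 : M 0 ff ≤ 1/2 := by
    unfold M unif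
    rw [iteratedDeriv_zero]
    exact ciSup_le ff_bound
  have m0' : 0 ≤ M 0 ff := Real.iSup_nonneg fun _ => abs_nonneg _
  have m2 : M 2 ff ≤ 1 := by
    unfold M unif
    rw [e2]
    exact ciSup_le dgg_bound
  have m2' : 1 ≤ M 2 ff := by
    unfold M unif
    rw [e2]
    have := le_ciSup (f := fun t => |deriv gg t|) ⟨1, by rintro _ ⟨t, rfl⟩; exact dgg_bound t⟩ (-1/2)
    simpa [dgg_half] using this
  have m1 : 1 ≤ M 1 ff := by
    unfold M unif
    rw [e1]
    have := le_ciSup (f := fun t => |gg t|) ⟨1, by rintro _ ⟨t, rfl⟩; exact gg_bound t⟩ 0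
    have h0 : gg 0 = 1 := by unfold gg; norm_num
    simpa [h0] using this
  have hd : Differentiable ℝ ff := fun t => (ff_deriv t).differentiableAt
  refine ⟨ff, ⟨hd.continuous, ⟨1/2, ff_bound⟩, ?_, 1, ?_⟩, by linarith, ?_⟩
  · show ContDiff ℝ ((1:ℕ) : WithTop ℕ∞) ff
    rw [Nat.cast_one, contDiff_one_iff_deriv, deriv_ff]
    exact ⟨hd, gg_lip.continuous⟩
  · show LipschitzWith 1 (iteratedDeriv 1 ff)
    rw [e1]; exact gg_lip
  · have h2 : M 2 ff = 1 := le_antisymm m2 m2'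
    rw [h2, Real.one_rpow, mul_one, ← Real.sqrt_eq_rpow]
    refine lt_of_lt_of_le ?_ m1
    have hs : √(M 0 ff) ≤ √(1/2) := Real.sqrt_le_sqrt m0
    have hp : √2 * √(1/2) = (1:ℝ) := by
      rw [← Real.sqrt_mul (by norm_num)]; norm_num
    have hpos : 0 < √(1/2 : ℝ) := by positivity
    rcases le_or_gt C 0 with hc | hc
    · have := mul_nonpos_of_nonpos_of_nonneg hc (Real.sqrt_nonneg (M 0 ff))
      linarith
    · calc C * √(M 0 ff) ≤ C * √(1/2) := by gcongr
        _ < √2 * √(1/2) := by gcongr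
        _ = 1 := hp
end

section
/- Let r ≥ 2 be an integer and f ∈ L^r_{∞,∞}. Then M_{r−1}(f)² ≤ 2 · M_{r−2}(f) · M_r(f). -/
open MeasureTheory Filter

theorem aux_exists (n : ℕ) : ∀ (f : ℝ → ℝ) (C : ℝ), ContDiff ℝ n f → (∀ t, |f t| ≤ C) →
    ∀ t : ℝ, ∃ x : ℝ, |x - t| ≤ n ∧ |iteratedDeriv n f x| ≤ 2 ^ n * C := by
  induction n with
  | zero =>
    intro f C _ hC t
    exact ⟨t, by simp, by simpa using hC t⟩
  | succ n ih =>
    intro f C hf hC t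
    have hf0 : ContDiff ℝ n f := hf.of_le (by exact_mod_cast n.le_succ)
    have hf1 : ContDiff ℝ n (fun z => f (z + 1)) := hf0.comp (contDiff_id.add contDiff_const)
    obtain ⟨x, hx, hb⟩ := ih (fun z => f (z + 1) - f z) (2 * C) (hf1.sub hf0) (by
      intro t
      have h1 := abs_le.1 (hC t)
      have h2 := abs_le.1 (hC (t + 1))
      exact abs_le.2 ⟨by linarith, by linarith⟩) t
    rw [iteratedDeriv_fun_sub hf1.contDiffAt hf0.contDiffAt, iteratedDeriv_comp_add_const] at hb
    have hd : Differentiable ℝ (iteratedDeriv n f) :=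
      hf.differentiable_iteratedDeriv n (by exact_mod_cast n.lt_succ_self)
    obtain ⟨c, hc, he⟩ := exists_deriv_eq_slope (iteratedDeriv n f) (show x < x + 1 by linarith)
      hd.continuous.continuousOn hd.differentiableOn
    refine ⟨c, ?_, ?_⟩
    · have := abs_le.1 hx
      push_cast
      exact abs_le.2 ⟨by linarith [hc.1], by linarith [hc.2]⟩
    · rw [iteratedDeriv_succ, he]
      simp only [add_sub_cancel_left, div_one]
      refine hb.trans (le_of_eq (by ring))

theorem aux_bdd (n : ℕ) (f : ℝ → ℝ) (C K : ℝ) (hf : ContDiff ℝ n f) (hC : ∀ t, |f t| ≤ C)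
    (hK0 : 0 ≤ K)
    (hK : ∀ x y, |iteratedDeriv n f x - iteratedDeriv n f y| ≤ K * |x - y|) :
    ∃ B, ∀ t, |iteratedDeriv n f t| ≤ B := by
  refine ⟨2 ^ n * C + K * n, fun t => ?_⟩
  obtain ⟨x, hx, hb⟩ := aux_exists n f C hf hC t
  have h1 := hK t x
  rw [abs_sub_comm t x] at h1
  have h2 := mul_le_mul_of_nonneg_left hx hK0
  have h3 := abs_sub_abs_le_abs_sub (iteratedDeriv n f t) (iteratedDeriv n f x)
  linarith

theorem aux_lip (h : ℝ → ℝ) (K : NNReal) (hK : LipschitzWith K h) (L : ℝ)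
    (hL : ∀ t, |deriv h t| ≤ L) (x y : ℝ) : |h y - h x| ≤ L * |y - x| := by
  have hac : AbsolutelyContinuousOnInterval h x y :=
    (hK.lipschitzOnWith (s := Set.uIcc x y)).absolutelyContinuousOnInterval
  rw [← hac.integral_deriv_eq_sub]
  exact intervalIntegral.norm_integral_le_of_norm_le_const (f := deriv h) (fun t _ => hL t)

theorem aux_ineq (g h : ℝ → ℝ) (hg : ∀ t, HasDerivAt g (h t) t) (A L : ℝ)
    (hA : ∀ t, |g t| ≤ A) (hL0 : 0 ≤ L) (hL : ∀ x y, |h y - h x| ≤ L * |y - x|) (t : ℝ)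
    (hm : 0 ≤ h t) : h t ^ 2 ≤ 2 * A * L := by
  have hA0 : 0 ≤ A := (abs_nonneg _).trans (hA 0)
  have key : ∀ s : ℝ, 0 ≤ L * (s * s) + (-2 * h t) * s + 2 * A := by
    intro s
    rcases le_total s 0 with hs | hs
    · have := mul_nonneg hm (neg_nonneg.2 hs)
      have := mul_nonneg hL0 (mul_self_nonneg s)
      nlinarith
    have hd : ∀ s, HasDerivAt (fun s => g (t + s) - g (t - s) - 2 * h t * s + L * (s * s))
        (h (t + s) + h (t - s) - 2 * h t + L * (2 * s)) s := by
      intro s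
      have h1 := (hg (t + s)).comp_const_add t s
      have h2 := (hg (t - s)).comp_const_sub t s
      have h3 := (hasDerivAt_id s).const_mul (2 * h t)
      have h4 := ((hasDerivAt_id s).mul (hasDerivAt_id s)).const_mul L
      refine (((h1.sub h2).sub h3).add h4).congr_deriv ?_
      simp only [id]
      ring
    have hmono := monotoneOn_of_deriv_nonneg (convex_Ici (0 : ℝ))
      (fun s _ => (hd s).continuousAt.continuousWithinAt)
      (fun s _ => (hd s).differentiableAt.differentiableWithinAt) (by
        intro s hs
        rw [interior_Ici] at hs
        have hs : 0 < s := hs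
        rw [(hd s).deriv]
        have h1 := abs_le.1 (hL t (t + s))
        have h2 := abs_le.1 (hL t (t - s))
        rw [show t + s - t = s by ring, abs_of_pos hs] at h1
        rw [show t - s - t = -s by ring, abs_neg, abs_of_pos hs] at h2
        linarith [h1.1, h2.1])
    have h0 := hmono (Set.mem_Ici.2 le_rfl) (Set.mem_Ici.2 hs) hs
    simp only [add_zero, sub_zero, sub_self, mul_zero] at h0
    have h1 := abs_le.1 (hA (t + s))
    have h2 := abs_le.1 (hA (t - s))
    linarith [h1.2, h2.1]
  have := discrim_le_zero key
  rw [discrim] at this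
  nlinarith

/-- For `r ≥ 2` and `f ∈ L^r_{∞,∞}` one has `M_{r-1}(f)² ≤ 2 M_{r-2}(f) M_r(f)`. -/
theorem stmt2 (r : ℕ) (hr : 2 ≤ r) (f : ℝ → ℝ) (hf : MemL r f) :
    (M (r - 1) f) ^ 2 ≤ 2 * M (r - 2) f * M r f := by
  obtain ⟨n, rfl⟩ : ∃ n, r = n + 2 := ⟨r - 2, by omega⟩
  obtain ⟨-, ⟨C, hC⟩, hcd, K, hK⟩ := hf
  simp only [show n + 2 - 1 = n + 1 by omega, show n + 2 - 2 = n by omega] at *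
  set h := iteratedDeriv (n + 1) f with hh
  have hdiff : Differentiable ℝ (iteratedDeriv n f) :=
    hcd.differentiable_iteratedDeriv n (by exact_mod_cast n.lt_succ_self)
  have hg : ∀ t, HasDerivAt (iteratedDeriv n f) (h t) t := by
    intro t
    rw [hh, iteratedDeriv_succ]
    exact (hdiff t).hasDerivAt
  obtain ⟨B, hB⟩ := aux_bdd (n + 1) f C K hcd hC K.2 (fun x y => by
    simpa [Real.dist_eq] using hK.dist_le_mul x y)
  have hB0 : 0 ≤ B := (abs_nonneg _).trans (hB 0)
  obtain ⟨D, hD⟩ := aux_bdd n f C B (hcd.of_le (by exact_mod_cast n.le_succ)) hC hB0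
    (fun x y => convex_univ.norm_image_sub_le_of_norm_deriv_le (fun t _ => hdiff t)
      (fun t _ => by rw [← iteratedDeriv_succ]; exact hB t) (Set.mem_univ y) (Set.mem_univ x))
  have hA : ∀ t, |iteratedDeriv n f t| ≤ M n f := fun t =>
    le_ciSup (f := fun t => |iteratedDeriv n f t|) ⟨D, by rintro _ ⟨s, rfl⟩; exact hD s⟩ t
  have hL : ∀ t, |deriv h t| ≤ M (n + 2) f := fun t => by
    have e : iteratedDeriv (n + 2) f = deriv h := iteratedDeriv_succ
    unfold M unif
    rw [e]
    exact le_ciSup (f := fun t => |deriv h t|)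
      ⟨(K : ℝ), by rintro _ ⟨s, rfl⟩; exact norm_deriv_le_of_lipschitz hK⟩ t
  have hL0 : 0 ≤ M (n + 2) f := (abs_nonneg _).trans (hL 0)
  have hlip := aux_lip h K hK _ hL
  have main : ∀ t, h t ^ 2 ≤ 2 * M n f * M (n + 2) f := by
    intro t
    rcases le_total 0 (h t) with ht | ht
    · exact aux_ineq _ h hg _ _ hA hL0 hlip t ht
    · have := aux_ineq (fun t => -iteratedDeriv n f t) (fun t => -h t) (fun t => (hg t).neg) _ _
        (fun t => by rw [abs_neg]; exact hA t) hL0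
        (fun x y => by
          rw [show -h y - -h x = -(h y - h x) by ring, abs_neg]; exact hlip x y) t
        (neg_nonneg.2 ht)
      simpa using this
  have hle : M (n + 1) f ≤ Real.sqrt (2 * M n f * M (n + 2) f) :=
    ciSup_le fun t => Real.abs_le_sqrt (main t)
  have h0 : 0 ≤ M (n + 1) f := Real.iSup_nonneg fun t => abs_nonneg _
  calc M (n + 1) f ^ 2 ≤ Real.sqrt (2 * M n f * M (n + 2) f) ^ 2 := by gcongr
    _ = _ := Real.sq_sqrt ((sq_nonneg _).trans (main 0))
end

section
/- (Kolmogorov's comparison theorem) Let r ∈ ℕ, f ∈ L^r_{∞,∞}, and a, λ > 0 be such that M_0(f) ≤ M_0(a·φ_{λ,r}) and M_r(f) ≤ M_r(a·φ_{λ,r}). If ξ, η ∈ ℝ are such that f(ξ) = a·φ_{λ,r}(η), then |f'(ξ)| ≤ a·|φ'_{λ,r}(η)|. -/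
open MeasureTheory Filter

/-! ### The Euler spline -/

lemma sgn_meas : Measurable (fun t : ℝ => Real.sign (Real.sin t)) := by
  have h : Measurable Real.sign := by
    unfold Real.sign
    exact Measurable.ite measurableSet_Iio measurable_const
      (Measurable.ite measurableSet_Ioi measurable_const measurable_const)
  exact h.comp Real.measurable_sin

lemma sgn_bd (x : ℝ) : |Real.sign x| ≤ 1 := by
  rcases Real.sign_apply_eq x with h | h | h <;> rw [h] <;> simp

lemma p0_int (a b : ℝ) : IntervalIntegrable (eulerPhi 0) volume a b := by
  have : IntervalIntegrable (fun _ : ℝ => (1:ℝ)) volume a b := intervalIntegrable_const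
  refine this.mono_fun sgn_meas.aestronglyMeasurable ?_
  refine Filter.Eventually.of_forall fun x => ?_
  simpa using! sgn_bd (Real.sin x)

lemma p_cont (n : ℕ) : Continuous (eulerPhi (n+1)) := by
  induction n with
  | zero =>
    exact (intervalIntegral.continuous_primitive p0_int 0).sub continuous_const
  | succ n ih =>
    exact (intervalIntegral.continuous_primitive (fun a b => ih.intervalIntegrable a b) 0).sub
      continuous_const

lemma p_int (n : ℕ) (a b : ℝ) : IntervalIntegrable (eulerPhi n) volume a b := by
  cases n with
  | zero => exact p0_int a b
  | succ n => exact (p_cont n).intervalIntegrable a b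

lemma p_sub (n : ℕ) (a b : ℝ) :
    eulerPhi (n+1) b - eulerPhi (n+1) a = ∫ x in a..b, eulerPhi n x := by
  simp only [eulerPhi]
  rw [← intervalIntegral.integral_interval_sub_left (p_int n 0 b) (p_int n 0 a)]
  ring

lemma p_mean (n : ℕ) : ∫ x in (0:ℝ)..(2*Real.pi), eulerPhi (n+1) x = 0 := by
  simp only [eulerPhi]
  rw [intervalIntegral.integral_sub, intervalIntegral.integral_const]
  · have := Real.pi_pos
    simp only [sub_zero, smul_eq_mul]
    field_simp
    ring
  · exact (intervalIntegral.continuous_primitive (p_int n) 0).intervalIntegrable _ _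
  · exact intervalIntegrable_const

lemma p_anti (n : ℕ) (x : ℝ) : eulerPhi n (x + Real.pi) = - eulerPhi n x := by
  induction n generalizing x with
  | zero => simp [eulerPhi, Real.sin_add_pi, Real.sign_neg]
  | succ n ih =>
    set k := eulerPhi (n+1) (0 + Real.pi) + eulerPhi (n+1) 0 with hk
    have h1 : ∀ x, eulerPhi (n+1) (x + Real.pi) = k - eulerPhi (n+1) x := by
      intro x
      have e1 := p_sub n (0 + Real.pi) (x + Real.pi)
      have e2 := p_sub n 0 x
      have e3 : ∫ x in (0 + Real.pi)..(x+Real.pi), eulerPhi n x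
          = - ∫ x in (0:ℝ)..x, eulerPhi n x := by
        rw [← intervalIntegral.integral_comp_add_right (fun y => eulerPhi n y) Real.pi,
          ← intervalIntegral.integral_neg]
        simp only [ih]
      linarith
    have h2 := p_mean n
    have hi := fun a b => p_int (n+1) a b
    rw [← intervalIntegral.integral_add_adjacent_intervals (hi 0 Real.pi) (hi Real.pi _)] at h2
    have e3 : ∫ x in Real.pi..(2*Real.pi), eulerPhi (n+1) x
          = Real.pi * k - ∫ x in (0:ℝ)..Real.pi, eulerPhi (n+1) x := by
      have : ∫ x in (0 + Real.pi)..(Real.pi+Real.pi), eulerPhi (n+1) x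
          = Real.pi * k - ∫ x in (0:ℝ)..Real.pi, eulerPhi (n+1) x := by
        rw [← intervalIntegral.integral_comp_add_right (fun y => eulerPhi (n+1) y) Real.pi]
        simp only [h1]
        rw [intervalIntegral.integral_sub intervalIntegrable_const (hi _ _),
          intervalIntegral.integral_const]
        simp
      rw [← this]; congr 1 <;> ring
    have hk0 : k = 0 := by
      have : Real.pi * k = 0 := by linarith
      rcases mul_eq_zero.1 this with h | h
      · exact absurd h Real.pi_pos.ne'
      · exact h
    rw [h1, hk0]; ring

lemma p_deriv (n : ℕ) (x : ℝ) : HasDerivAt (eulerPhi (n+2)) (eulerPhi (n+1) x) x := by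
  have := intervalIntegral.integral_hasDerivAt_right ((p_cont n).intervalIntegrable 0 x)
    (p_cont n).stronglyMeasurable.stronglyMeasurableAtFilter (p_cont n).continuousAt
  exact this.sub_const _

lemma p1_even (x : ℝ) : eulerPhi 1 (-x) = eulerPhi 1 x := by
  have e1 := p_sub 0 0 (-x)
  have e2 := p_sub 0 0 x
  have e3 : ∫ x in (0:ℝ)..(-x), eulerPhi 0 x = ∫ x in (0:ℝ)..x, eulerPhi 0 x := by
    have := intervalIntegral.integral_comp_neg (a := 0) (b := x) (fun y => eulerPhi 0 y)
    rw [intervalIntegral.integral_symm, ← neg_zero, ← this, ← intervalIntegral.integral_neg]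
    simp [eulerPhi, Real.sign_neg]
  simp only [Nat.zero_add] at *
  linarith

lemma p1_lin {x : ℝ} (hx : 0 ≤ x) (hx' : x ≤ Real.pi) : eulerPhi 1 x = x - Real.pi / 2 := by
  have key : ∀ x, 0 ≤ x → x ≤ Real.pi → eulerPhi 1 x = x + eulerPhi 1 0 := by
    intro x hx hx'
    have e2 := p_sub 0 0 x
    have : ∫ x in (0:ℝ)..x, eulerPhi 0 x = ∫ x in (0:ℝ)..x, (1:ℝ) := by
      apply intervalIntegral.integral_congr_ae
      have : ∀ᵐ y : ℝ, y ≠ Real.pi := by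
        simp [ae_iff, measure_singleton]
      filter_upwards [this] with y hy1 hy
      rw [Set.uIoc_of_le hx] at hy
      exact Real.sign_of_pos (Real.sin_pos_of_pos_of_lt_pi hy.1
        (lt_of_le_of_ne (hy.2.trans hx') hy1))
    rw [this] at e2
    simp at e2
    linarith
  have h0 := p_anti 1 0
  have h1 := key Real.pi Real.pi_pos.le le_rfl
  rw [zero_add] at h0
  have h2 := key x hx hx'
  linarith

/-- shifted spline -/
noncomputable def Psi (n : ℕ) (x : ℝ) : ℝ := eulerPhi (n+1) (x + (n+1) * (Real.pi/2))

lemma Psi_cont (n : ℕ) : Continuous (Psi n) := (p_cont n).comp (by fun_prop)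

lemma Psi_anti (n : ℕ) (x : ℝ) : Psi n (x + Real.pi) = - Psi n x := by
  unfold Psi
  rw [← p_anti]; congr 1; ring

lemma Psi_deriv (n : ℕ) (x : ℝ) : HasDerivAt (Psi (n+1)) (Psi n (x + Real.pi/2)) x := by
  have h := (p_deriv n (x + ((n+1:ℕ)+1) * (Real.pi/2))).comp_add_const x _
  refine HasDerivAt.congr_deriv (f := Psi (n+1)) h ?_
  unfold Psi; congr 1; push_cast; ring

lemma Psi_odd (n : ℕ) (x : ℝ) : Psi n (-x) = - Psi n x := by
  induction n generalizing x with
  | zero =>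
    rw [← Psi_anti]
    unfold Psi
    rw [← p1_even]
    have := p_anti 1 (x + Real.pi/2)
    have h2 := p_anti 1 (x + Real.pi/2 - Real.pi)
    have h3 := p_anti 1 (x + Real.pi/2)
    simp only [sub_add_cancel] at h2
    simp only [Nat.zero_add]
    have e1 : -(-x + ((0:ℕ)+1) * (Real.pi/2)) = x + Real.pi/2 - Real.pi := by push_cast; ring
    have e2 : (x + Real.pi + ((0:ℕ)+1) * (Real.pi/2)) = x + Real.pi/2 + Real.pi := by
      push_cast; ring
    rw [e1, e2]; linarith
  | succ n ih =>
    have hd : ∀ x, HasDerivAt (fun x => Psi (n+1) (-x) + Psi (n+1) x) 0 x := by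
      intro x
      have h1 := (Psi_deriv n (-x)).comp x (hasDerivAt_neg x)
      have h2 := h1.add (Psi_deriv n x)
      refine HasDerivAt.congr_deriv (f := fun x => Psi (n+1) (-x) + Psi (n+1) x) h2 ?_
      have := ih (x - Real.pi/2)
      have h3 := Psi_anti n (x - Real.pi/2)
      have e1 : -(x - Real.pi/2) = -x + Real.pi/2 := by ring
      have e2 : x - Real.pi/2 + Real.pi = x + Real.pi/2 := by ring
      rw [e1] at this; rw [e2] at h3
      rw [this, h3]; ring
    have hc := is_const_of_deriv_eq_zero (fun x => (hd x).differentiableAt)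
      (fun x => (hd x).deriv) x (x + Real.pi)
    have h4 := Psi_anti (n+1) (-(x+Real.pi))
    have e1 : -(x+Real.pi) + Real.pi = -x := by ring
    rw [e1] at h4
    have h5 := Psi_anti (n+1) x
    linarith

lemma Psi_zero (n : ℕ) : Psi n 0 = 0 := by
  have := Psi_odd n 0
  simp at this; linarith

lemma Psi_refl (n : ℕ) (x : ℝ) : Psi n (Real.pi - x) = Psi n x := by
  rw [sub_eq_neg_add, Psi_anti, Psi_odd, neg_neg]

lemma Psi_zero_lin {x : ℝ} (h1 : -(Real.pi/2) ≤ x) (h2 : x ≤ Real.pi/2) : Psi 0 x = x := by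
  unfold Psi
  rw [p1_lin] <;> push_cast <;> linarith

lemma Psi_mono (n : ℕ) : StrictMonoOn (Psi n) (Set.Icc (-(Real.pi/2)) (Real.pi/2)) := by
  induction n with
  | zero =>
    intro x hx y hy hxy
    rwa [Psi_zero_lin hx.1 hx.2, Psi_zero_lin hy.1 hy.2]
  | succ n ih =>
    apply strictMonoOn_of_deriv_pos (convex_Icc _ _) (Psi_cont _).continuousOn
    intro x hx
    rw [interior_Icc] at hx
    have hpi := Real.pi_pos
    rw [(Psi_deriv n x).deriv]
    have pos : ∀ y, 0 < y → y ≤ Real.pi/2 → 0 < Psi n y := by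
      intro y hy hy'
      rw [← Psi_zero n]
      exact ih ⟨by linarith, by linarith⟩ ⟨by linarith, hy'⟩ hy
    rcases le_total x 0 with h | h
    · exact pos _ (by linarith [hx.1]) (by linarith)
    · rw [← Psi_refl]
      exact pos _ (by linarith [hx.2]) (by linarith)

lemma Psi_le_aux (n : ℕ) {x : ℝ} (h1 : -(Real.pi/2) ≤ x) (h2 : x ≤ Real.pi/2) :
    |Psi n x| ≤ Psi n (Real.pi/2) := by
  have hpi := Real.pi_pos
  have hm := (Psi_mono n).monotoneOn
  rw [abs_le, ← Psi_odd]
  exact ⟨hm ⟨le_rfl, by linarith⟩ ⟨h1, h2⟩ h1, hm ⟨h1, h2⟩ ⟨by linarith, le_rfl⟩ h2⟩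

/-- reduction to the fundamental interval -/
lemma Psi_red (n : ℕ) (y : ℝ) : ∃ z, -(Real.pi/2) ≤ z ∧ z ≤ Real.pi/2 ∧ Psi n y = Psi n z ∧
    |deriv (Psi n) y| = |deriv (Psi n) z| := by
  have hpi := Real.pi_pos
  have dneg : ∀ x, deriv (Psi n) (-x) = deriv (Psi n) x := by
    intro x
    have h := deriv_comp_neg (Psi n) x
    have : (fun x => Psi n (-x)) = fun x => - Psi n x := funext (Psi_odd n)
    rw [this, deriv.fun_neg] at h
    linarith
  have dpi : ∀ x, deriv (Psi n) (x + Real.pi) = - deriv (Psi n) x := by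
    intro x
    have h := deriv_comp_add_const (Psi n) Real.pi x
    have : (fun x => Psi n (x + Real.pi)) = fun x => - Psi n x := funext (Psi_anti n)
    rw [this, deriv.fun_neg] at h
    linarith
  -- symmetric statement up to sign
  have key : ∀ (m : ℤ) (x : ℝ), (∃ z, -(Real.pi/2) ≤ z ∧ z ≤ Real.pi/2 ∧ Psi n x = Psi n z ∧
    |deriv (Psi n) x| = |deriv (Psi n) z|) → (∃ z, -(Real.pi/2) ≤ z ∧ z ≤ Real.pi/2 ∧
      Psi n (x + m * Real.pi) = Psi n z ∧
    |deriv (Psi n) (x + m * Real.pi)| = |deriv (Psi n) z|) := by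
    intro m x hx
    induction m using Int.induction_on with
    | zero => simpa using hx
    | succ i ih =>
      obtain ⟨z, h1, h2, h3, h4⟩ := ih
      refine ⟨-z, by linarith, by linarith, ?_, ?_⟩
      · rw [Psi_odd, ← h3, ← Psi_anti]; congr 1; push_cast; ring
      · rw [dneg, ← h4, ← abs_neg (deriv _ (x + (i:ℤ) * Real.pi)), ← dpi]; congr 2; push_cast; ring
    | pred i ih =>
      obtain ⟨z, h1, h2, h3, h4⟩ := ih
      have e : x + ((-(i:ℤ) - 1 : ℤ):ℝ) * Real.pi + Real.pi = x + ((-(i:ℤ) : ℤ):ℝ) * Real.pi := by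
        push_cast; ring
      refine ⟨-z, by linarith, by linarith, ?_, ?_⟩
      · rw [Psi_odd, ← h3, ← e, Psi_anti, neg_neg]
      · rw [dneg, ← h4, ← e, dpi, abs_neg]
  obtain ⟨h1, h2⟩ := toIcoMod_mem_Ico hpi (-(Real.pi/2)) y
  have := key (toIcoDiv hpi (-(Real.pi/2)) y) (toIcoMod hpi (-(Real.pi/2)) y)
    ⟨_, h1, by linarith, rfl, rfl⟩
  have e := toIcoMod_add_toIcoDiv_zsmul hpi (-(Real.pi/2)) y
  rw [zsmul_eq_mul] at e
  rwa [e] at this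

lemma Psi_le (n : ℕ) (x : ℝ) : |Psi n x| ≤ Psi n (Real.pi/2) := by
  obtain ⟨z, h1, h2, h3, -⟩ := Psi_red n x
  rw [h3]; exact Psi_le_aux n h1 h2

lemma Psi_pos (n : ℕ) {y : ℝ} (h1 : 0 < y) (h2 : y ≤ Real.pi/2) : 0 < Psi n y := by
  have hpi := Real.pi_pos
  rw [← Psi_zero n]
  exact Psi_mono n ⟨by linarith, by linarith⟩ ⟨by linarith, h2⟩ h1

/-! ### The class -/

/-- `W n f`: `f` is `n` times differentiable and the `n`-th derivative is 1-Lipschitz -/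
def W : ℕ → (ℝ → ℝ) → Prop
  | 0, f => ∀ x y, |f x - f y| ≤ |x - y|
  | (n+1), f => Differentiable ℝ f ∧ W n (deriv f)

lemma W_cont {n : ℕ} {f : ℝ → ℝ} (h : W n f) : Continuous f := by
  cases n with
  | zero =>
    exact (LipschitzWith.of_dist_le_mul (K := 1) (fun x y => by
      simpa [Real.dist_eq] using h x y)).continuous
  | succ n => exact h.1.continuous

lemma W_neg {n : ℕ} {f : ℝ → ℝ} (h : W n f) : W n (fun x => - f x) := by
  induction n generalizing f with
  | zero =>
    intro x y
    rw [show -f x - -f y = -(f x - f y) by ring, abs_neg]; exact h x y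
  | succ n ih =>
    refine ⟨h.1.neg, ?_⟩
    have : deriv (fun x => - f x) = fun x => - deriv f x := by
      funext x; exact deriv.fun_neg
    rw [this]; exact ih h.2

lemma W_refl {n : ℕ} {f : ℝ → ℝ} (h : W n f) : W n (fun x => f (-x)) := by
  induction n generalizing f with
  | zero =>
    intro x y
    have := h (-x) (-y)
    rwa [show -x - -y = -(x-y) by ring, abs_neg] at this
  | succ n ih =>
    refine ⟨h.1.comp differentiable_neg, ?_⟩
    have : deriv (fun x => f (-x)) = fun x => - deriv f (-x) := by
      funext x; exact deriv_comp_neg f x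
    rw [this]; exact W_neg (ih h.2)

lemma scale_deriv {f : ℝ → ℝ} (n : ℕ) {m : ℝ} (hm : 0 < m) (x : ℝ) :
    deriv (fun x => (m⁻¹)^(n+2) * f (m * x)) x = (m⁻¹)^(n+1) * deriv f (m * x) := by
  rw [deriv_const_mul_field, deriv_comp_mul_left m f x, smul_eq_mul, pow_succ (m⁻¹) (n+1), ← mul_assoc,
    mul_assoc _ (m⁻¹) m, inv_mul_cancel₀ hm.ne', mul_one]

lemma W_scale {n : ℕ} {f : ℝ → ℝ} (h : W n f) {m : ℝ} (hm : 0 < m) :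
    W n (fun x => (m⁻¹)^(n+1) * f (m * x)) := by
  induction n generalizing f with
  | zero =>
    intro x y
    have := h (m*x) (m*y)
    rw [← mul_sub, abs_mul, abs_of_pos hm] at this
    rw [← mul_sub, abs_mul, zero_add, pow_one, abs_of_pos (inv_pos.2 hm), inv_mul_le_iff₀ hm]
    exact this
  | succ n ih =>
    refine ⟨?_, ?_⟩
    · have := h.1
      fun_prop
    have : deriv (fun x => (m⁻¹)^(n+1+1) * f (m * x)) =
        fun x => (m⁻¹)^(n+1) * deriv f (m * x) := by
      funext x; exact scale_deriv n hm x
    rw [this]; exact ih h.2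

lemma deriv_abs_le_of_W0 {f : ℝ → ℝ} (h : W 0 f) (x : ℝ) : |deriv f x| ≤ 1 := by
  have : LipschitzWith 1 f := LipschitzWith.of_dist_le_mul (K := 1) (fun x y => by
      simpa [Real.dist_eq] using h x y)
  simpa using norm_deriv_le_of_lipschitz this (x₀ := x)

lemma lip_of_deriv {f : ℝ → ℝ} (hf : Differentiable ℝ f) {C : ℝ} (h : ∀ x, |deriv f x| ≤ C)
    (x y : ℝ) : |f x - f y| ≤ C * |x - y| := by
  have := convex_univ.norm_image_sub_le_of_norm_deriv_le (f := f) (C := C) (fun x _ => hf x)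
    (fun x _ => h x) (Set.mem_univ y) (Set.mem_univ x)
  simpa using this

lemma W_shift {n : ℕ} {f : ℝ → ℝ} (h : W (n+1) f) {s : ℝ} (hs : 0 ≤ s) (hs' : s ≤ 1) :
    W n (fun x => f (x + s) - f x) := by
  induction n generalizing f with
  | zero =>
    have hd : ∀ x, deriv (fun x => f (x + s) - f x) x = deriv f (x+s) - deriv f x := by
      intro x
      have := h.1
      rw [deriv_fun_sub (by fun_prop) (by fun_prop), deriv_comp_add_const]
    intro x y
    have := lip_of_deriv (f := fun x => f (x + s) - f x) (C := 1) (by have := h.1; fun_prop)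
      (fun x => ?_) x y
    · simpa using this
    · rw [hd]
      have h2 := h.2 (x+s) x
      simp only [add_sub_cancel_left] at h2
      rw [abs_of_nonneg hs] at h2
      linarith
  | succ n ih =>
    refine ⟨by have := h.1; fun_prop, ?_⟩
    have hd : deriv (fun x => f (x + s) - f x) = fun x => deriv f (x+s) - deriv f x := by
      funext x
      have := h.1
      rw [deriv_fun_sub (by fun_prop) (by fun_prop), deriv_comp_add_const]
    rw [hd]; exact ih h.2

lemma W_bdd (n : ℕ) (C : ℝ) : ∃ D, ∀ f, W n f → (∀ x, |f x| ≤ C) → ∀ x, |deriv f x| ≤ D := by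
  induction n generalizing C with
  | zero => exact ⟨1, fun f h _ x => deriv_abs_le_of_W0 h x⟩
  | succ n ih =>
    obtain ⟨D, hD⟩ := ih (2*C)
    refine ⟨2*C + D, fun f h hC x => ?_⟩
    obtain ⟨z, hz, hz'⟩ := exists_deriv_eq_slope f (show x < x+1 by linarith)
      h.1.continuous.continuousOn h.1.differentiableOn
    have h1 := hD _ (W_shift h (s := z - x) (by linarith [hz.1]) (by linarith [hz.2])) (fun y => by
      have h1 := hC (y + (z-x))
      have h2 := hC y
      rw [abs_le] at *
      constructor <;> linarith) x
    have hf := h.1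
    rw [deriv_fun_sub (by fun_prop) (by fun_prop), deriv_comp_add_const] at h1
    rw [show x + (z - x) = z by ring, hz'] at h1
    have h2 := hC (x+1)
    have h3 := hC x
    simp only [add_sub_cancel_left, div_one] at h1
    rw [abs_le] at *
    constructor <;> linarith

/-! ### Comparison -/

/-- integrated comparison property -/
def Cmp (n : ℕ) : Prop := ∀ g, W n g → (∀ x, |g x| ≤ Psi n (Real.pi/2)) →
  ∀ ξ η, η ≤ Real.pi/2 → Psi n η ≤ g ξ → ∀ t, 0 ≤ t → -(Real.pi/2) ≤ η - t →
    Psi n (η - t) ≤ g (ξ + t)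

lemma Cmp_left {n : ℕ} (h : Cmp n) {g : ℝ → ℝ} (hg : W n g)
    (hb : ∀ x, |g x| ≤ Psi n (Real.pi/2)) {ξ η : ℝ} (hη : η ≤ Real.pi/2) (hh : Psi n η ≤ g ξ)
    {t : ℝ} (ht : 0 ≤ t) (ht' : -(Real.pi/2) ≤ η - t) : Psi n (η - t) ≤ g (ξ - t) := by
  have := h _ (W_refl hg) (fun x => hb (-x)) (-ξ) η hη (by simpa using hh) t ht ht'
  rwa [show -(-ξ + t) = ξ - t by ring] at this

lemma Cmp_zero : Cmp 0 := by
  intro g hg hb ξ η hη hh t ht ht'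
  rw [Psi_zero_lin (by linarith) hη] at hh
  rw [Psi_zero_lin (by linarith) (by linarith)]
  have := hg (ξ+t) ξ
  rw [add_sub_cancel_left, abs_of_nonneg ht, abs_le] at this
  linarith

/-- gain of `F` to the right of a point of large derivative -/
lemma gain_right {n : ℕ} (h : Cmp n) {F : ℝ → ℝ} (hF : W (n+1) F)
    (hb : ∀ x, |deriv F x| ≤ Psi n (Real.pi/2)) {x η : ℝ} (h0 : 0 ≤ η) (hη : η ≤ Real.pi/2)
    (hx : Psi n η ≤ deriv F x) :
    Psi (n+1) (Real.pi/2) - Psi (n+1) (Real.pi/2 - η) ≤ F (x + η) - F x := by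
  have hpi := Real.pi_pos
  have hd : ∀ t, HasDerivAt (fun t => F (x + t) + Psi (n+1) (η - Real.pi/2 - t))
      (deriv F (x+t) - Psi n (η - t)) t := by
    intro t
    have h1 := (hF.1 (x+t)).hasDerivAt.comp_const_add x t
    have h2 := (Psi_deriv n (η - Real.pi/2 - t)).comp_const_sub (η - Real.pi/2) t
    refine HasDerivAt.congr_deriv (h1.add h2) ?_
    rw [show η - Real.pi/2 - t + Real.pi/2 = η - t by ring]; ring
  have hm : MonotoneOn (fun t => F (x + t) + Psi (n+1) (η - Real.pi/2 - t)) (Set.Icc 0 η) := by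
    apply monotoneOn_of_deriv_nonneg (convex_Icc _ _)
    · exact fun t _ => (hd t).continuousAt.continuousWithinAt
    · exact fun t _ => (hd t).differentiableAt.differentiableWithinAt
    · intro t ht
      rw [interior_Icc] at ht
      rw [(hd t).deriv]
      have := h _ hF.2 hb x η hη hx t ht.1.le (by linarith [ht.2])
      linarith
  have h1 := hm ⟨le_rfl, h0⟩ ⟨h0, le_rfl⟩ h0
  simp only [add_zero, sub_zero] at h1
  rw [show η - Real.pi/2 - η = -(Real.pi/2) by ring,
    show η - Real.pi/2 = -(Real.pi/2 - η) by ring, Psi_odd, Psi_odd] at h1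
  linarith

lemma gain_left {n : ℕ} (h : Cmp n) {F : ℝ → ℝ} (hF : W (n+1) F)
    (hb : ∀ x, |deriv F x| ≤ Psi n (Real.pi/2)) {x η : ℝ} (h0 : 0 ≤ η) (hη : η ≤ Real.pi/2)
    (hx : Psi n η ≤ deriv F x) :
    Psi (n+1) (Real.pi/2) - Psi (n+1) (Real.pi/2 - η) ≤ F x - F (x - η) := by
  have hd : ∀ y, deriv (fun x => - F (-x)) y = deriv F (-y) := by
    intro y
    rw [deriv.fun_neg, deriv_comp_neg, neg_neg]
  have := gain_right h (W_neg (W_refl hF)) (x := -x) (η := η)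
    (fun y => by rw [hd]; exact hb _) h0 hη (by rw [hd]; simpa using hx)
  simp only [neg_neg] at this
  rw [show -(-x + η) = x - η by ring] at this
  linarith

lemma N0 {n : ℕ} (h : Cmp n) {F : ℝ → ℝ} (hF : W (n+1) F)
    (hb : ∀ x, |deriv F x| ≤ Psi n (Real.pi/2)) {m : ℝ} (hm : m < Psi (n+1) (Real.pi/2))
    (hFm : ∀ x, |F x| ≤ m) : ∃ K', K' < Psi n (Real.pi/2) ∧ ∀ x, |deriv F x| ≤ K' := by
  have hpi := Real.pi_pos
  -- choose η
  have hc : Tendsto (fun d => Psi (n+1) d) (nhdsWithin 0 (Set.Ioi 0)) (nhds 0) := by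
    have := (Psi_cont (n+1)).tendsto 0
    rw [Psi_zero] at this
    exact this.mono_left nhdsWithin_le_nhds
  have h1 := hc.eventually (gt_mem_nhds (show (0:ℝ) < Psi (n+1) (Real.pi/2) - m by linarith))
  have h2 : ∀ᶠ d in nhdsWithin (0:ℝ) (Set.Ioi 0), d ∈ Set.Ioo 0 (Real.pi/2) :=
    Ioo_mem_nhdsGT (by linarith)
  obtain ⟨d, hd1, hd2⟩ := (h1.and h2).exists
  have main : ∀ G : ℝ → ℝ, W (n+1) G → (∀ x, |deriv G x| ≤ Psi n (Real.pi/2)) →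
      (∀ x, |G x| ≤ m) → ∀ x, deriv G x ≤ Psi n (Real.pi/2 - d) := by
    intro G hG hbG hGm x
    by_contra hcon
    push Not at hcon
    have e1 := gain_right h hG hbG (x := x) (η := Real.pi/2 - d) (by linarith [hd2.2])
      (by linarith [hd2.1]) hcon.le
    have e2 := gain_left h hG hbG (x := x) (η := Real.pi/2 - d) (by linarith [hd2.2])
      (by linarith [hd2.1]) hcon.le
    rw [show Real.pi/2 - (Real.pi/2 - d) = d by ring] at e1 e2
    have e3 := abs_le.1 (hGm (x + (Real.pi/2 - d)))
    have e4 := abs_le.1 (hGm (x - (Real.pi/2 - d)))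
    linarith [e3.2, e4.1]
  refine ⟨Psi n (Real.pi/2 - d), ?_, fun x => ?_⟩
  · exact Psi_mono n ⟨by linarith [hd2.2], by linarith [hd2.1]⟩ ⟨by linarith, le_rfl⟩
      (by linarith [hd2.1])
  · rw [abs_le]
    refine ⟨?_, main F hF hb hFm x⟩
    have := main _ (W_neg hF) (fun x => by rw [deriv.fun_neg, abs_neg]; exact hb x)
      (fun x => by rw [abs_neg]; exact hFm x) x
    rw [deriv.fun_neg] at this
    linarith

lemma Nbound {n : ℕ} (h : Cmp n) {f : ℝ → ℝ} (hf : W (n+1) f)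
    (hb : ∀ x, |f x| ≤ Psi (n+1) (Real.pi/2)) (x : ℝ) : |deriv f x| ≤ Psi n (Real.pi/2) := by
  have hpi := Real.pi_pos
  by_contra hcon
  push Not at hcon
  set K := Psi n (Real.pi/2) with hK
  have hKpos : 0 < K := Psi_pos n (by linarith) le_rfl
  have hK1 : 0 < Psi (n+1) (Real.pi/2) := Psi_pos _ (by linarith) le_rfl
  obtain ⟨D0, hD0⟩ := W_bdd (n+1) (Psi (n+1) (Real.pi/2))
  have hbdd : BddAbove (Set.range fun x => |deriv f x|) :=
    ⟨D0, by rintro _ ⟨y, rfl⟩; exact hD0 f hf hb y⟩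
  set D := ⨆ x, |deriv f x| with hD
  have hle : ∀ y, |deriv f y| ≤ D := fun y => le_ciSup hbdd y
  have hDK : K < D := hcon.trans_le (hle x)
  set m := (D / K) ^ ((1:ℝ) / ((n+1:ℕ):ℝ)) with hm
  have hDK1 : 1 < D / K := (one_lt_div hKpos).2 hDK
  have hm1 : 1 < m := Real.one_lt_rpow hDK1 (by positivity)
  have hmp : m ^ (n+1) = D / K := by
    rw [hm, one_div]
    exact Real.rpow_inv_natCast_pow (by linarith) (by omega)
  have hm0 : 0 < m := by linarith
  have hmi : m⁻¹ < 1 := inv_lt_one_of_one_lt₀ hm1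
  have hmi0 : 0 < m⁻¹ := inv_pos.2 hm0
  have hWs := W_scale hf hm0
  have hinv : (m⁻¹)^(n+1) * D = K := by
    rw [inv_pow, hmp, inv_div, div_mul_cancel₀ _ (hKpos.trans hDK).ne']
  have hds : ∀ y, |deriv (fun x => (m⁻¹)^(n+1+1) * f (m * x)) y|
      = (m⁻¹)^(n+1) * |deriv f (m * y)| := by
    intro y
    rw [scale_deriv n hm0, abs_mul, abs_of_pos (pow_pos hmi0 _)]
  obtain ⟨K', hK', hK''⟩ := N0 h hWs (m := (m⁻¹)^(n+1+1) * Psi (n+1) (Real.pi/2))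
    (fun y => by
      rw [hds, ← hK, ← hinv]
      exact mul_le_mul_of_nonneg_left (hle _) (pow_pos hmi0 _).le)
    (by
      have : (m⁻¹)^(n+1+1) < 1 := pow_lt_one₀ hmi0.le hmi (by omega)
      nlinarith)
    (fun y => by
      rw [abs_mul, abs_of_pos (pow_pos hmi0 _)]
      exact mul_le_mul_of_nonneg_left (hb _) (pow_pos hmi0 _).le)
  have : D ≤ m^(n+1) * K' := by
    refine ciSup_le fun y => ?_
    have := hK'' (m⁻¹ * y)
    rw [hds, mul_inv_cancel_left₀ hm0.ne', inv_pow, inv_mul_le_iff₀ (pow_pos hm0 _)] at this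
    exact this
  have h3 : m^(n+1) * K' < m^(n+1) * K := mul_lt_mul_of_pos_left hK' (pow_pos hm0 _)
  rw [hmp, div_mul_cancel₀ _ hKpos.ne'] at h3
  rw [hmp] at this
  linarith

lemma E1 {n : ℕ} (h : Cmp n) {f : ℝ → ℝ} (hf : W (n+1) f)
    (hb : ∀ x, |f x| ≤ Psi (n+1) (Real.pi/2)) {x y : ℝ} (hy1 : -(Real.pi/2) < y) (hy0 : y ≤ 0)
    (hxy : f x = Psi (n+1) y) : - Psi n (y + Real.pi/2) ≤ deriv f x := by
  by_contra hcon
  push Not at hcon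
  have hpi := Real.pi_pos
  have hg : W n (fun x => - deriv f x) := W_neg hf.2
  have hgb : ∀ x, |(- deriv f x)| ≤ Psi n (Real.pi/2) := fun x => by
    rw [abs_neg]; exact Nbound h hf hb x
  have hd : ∀ t, HasDerivAt (fun t => f (x + t) - Psi (n+1) (y - t))
      (deriv f (x+t) + Psi n (y + Real.pi/2 - t)) t := by
    intro t
    have h1 := (hf.1 (x+t)).hasDerivAt.comp_const_add x t
    have h2 := (Psi_deriv n (y - t)).comp_const_sub y t
    refine HasDerivAt.congr_deriv (h1.sub h2) ?_
    rw [show y - t + Real.pi/2 = y + Real.pi/2 - t by ring]; ring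
  set T := y + Real.pi/2 with hT
  have hT0 : 0 < T := by linarith
  have hm : AntitoneOn (fun t => f (x + t) - Psi (n+1) (y - t)) (Set.Icc 0 T) := by
    apply antitoneOn_of_deriv_nonpos (convex_Icc _ _)
    · exact fun t _ => (hd t).continuousAt.continuousWithinAt
    · exact fun t _ => (hd t).differentiableAt.differentiableWithinAt
    · intro t ht
      rw [interior_Icc] at ht
      rw [(hd t).deriv]
      have := h _ hg hgb x T (by linarith) (by linarith) t ht.1.le (by linarith [ht.2])
      linarith
  have hTv : 0 ≤ f (x + T) - Psi (n+1) (y - T) := by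
    rw [show y - T = -(Real.pi/2) by rw [hT]; ring, Psi_odd]
    linarith [(abs_le.1 (hb (x+T))).1]
  have h00 : f (x + 0) - Psi (n+1) (y - 0) = 0 := by simp [hxy]
  have hz : ∀ t ∈ Set.Icc 0 T, f (x + t) - Psi (n+1) (y - t) = 0 := by
    intro t ht
    have e1 := hm ⟨le_rfl, hT0.le⟩ ht ht.1
    have e2 := hm ht ⟨hT0.le, le_rfl⟩ ht.2
    simp only at e1 e2
    linarith
  have d1 := (hd 0).hasDerivWithinAt (s := Set.Icc 0 T)
  have d2 : HasDerivWithinAt (fun t => f (x + t) - Psi (n+1) (y - t)) 0 (Set.Icc 0 T) 0 :=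
    (hasDerivWithinAt_const 0 _ (0:ℝ)).congr hz h00
  have := (uniqueDiffOn_Icc hT0 0 ⟨le_rfl, hT0.le⟩).eq_deriv _ d1 d2
  simp at this
  linarith

lemma E2 {n : ℕ} (h : Cmp n) {f : ℝ → ℝ} (hf : W (n+1) f)
    (hb : ∀ x, |f x| ≤ Psi (n+1) (Real.pi/2)) {x y : ℝ} (hy1 : -(Real.pi/2) < y)
    (hy2 : y < Real.pi/2)
    (hxy : f x = Psi (n+1) y) : - Psi n (y + Real.pi/2) ≤ deriv f x := by
  rcases le_total y 0 with h0 | h0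
  · exact E1 h hf hb hy1 h0 hxy
  · have := E1 h (W_neg (W_refl hf)) (x := -x) (y := -y) (fun y => by rw [abs_neg]; exact hb _)
      (by linarith) (by linarith) (by simp [Psi_odd, hxy])
    rw [deriv.fun_neg, deriv_comp_neg, neg_neg, neg_neg] at this
    rw [← Psi_refl] at this
    rwa [show Real.pi - (-y + Real.pi/2) = y + Real.pi/2 by ring] at this

lemma Psi_cpos (n : ℕ) {y : ℝ} (hy1 : -(Real.pi/2) < y) (hy2 : y < Real.pi/2) :
    0 < Psi n (y + Real.pi/2) := by
  rcases le_total y 0 with h | h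
  · exact Psi_pos n (by linarith) (by linarith)
  · rw [← Psi_refl]
    exact Psi_pos n (by linarith) (by linarith)

lemma Cmp_succ {n : ℕ} (h : Cmp n) : Cmp (n+1) := by
  intro f hf hb
  have hpi := Real.pi_pos
  -- strict version
  have step : ∀ ξ η κ t, η < Real.pi/2 → 1 < κ → Psi (n+1) η ≤ f ξ → 0 ≤ t →
      -(Real.pi/2) ≤ η - κ * t → Psi (n+1) (η - κ * t) ≤ f (ξ + t) := by
    intro ξ η κ t hη hκ hh ht ht'
    have := image_le_of_deriv_right_lt_deriv_boundary (a := 0) (b := t)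
      (f := fun s => Psi (n+1) (η - κ * s)) (f' := fun s => - κ * Psi n (η - κ * s + Real.pi/2))
      (B := fun s => f (ξ + s)) (B' := fun s => deriv f (ξ + s))
      (((Psi_cont (n+1)).comp (by fun_prop)).continuousOn)
      (fun s _ => by
        have h1 : HasDerivAt (fun s => η - κ * s) (-κ) s := by
          simpa using ((hasDerivAt_id s).const_mul κ).const_sub η
        have h2 := (Psi_deriv n (η - κ * s)).comp s h1
        exact (HasDerivAt.congr_deriv h2 (by ring)).hasDerivWithinAt)
      (by simpa using hh)
      (fun s => (hf.1 (ξ+s)).hasDerivAt.comp_const_add ξ s)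
      (fun s hs he => by
        have a1 : κ * s < κ * t := mul_lt_mul_of_pos_left hs.2 (by linarith)
        have a2 : 0 ≤ κ * s := mul_nonneg (by linarith) hs.1
        have h1 := E2 h hf hb (x := ξ + s) (y := η - κ * s) (by linarith) (by linarith) he.symm
        have h2 := Psi_cpos n (y := η - κ * s) (by linarith) (by linarith)
        nlinarith)
    exact this ⟨ht, le_rfl⟩
  intro ξ η hη hh t ht ht'
  rcases ht.eq_or_lt with rfl | htp
  · simpa using hh
  -- limit: use η' = η - e*t, κ = 1 + e? 
  have lim : ∀ e, 0 < e → e * t + e ≤ η - t + Real.pi/2 →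
      Psi (n+1) (η - t - (e * t + e)) ≤ f (ξ + t) := by
    intro e he hle
    have := step ξ (η - e) (1 + e) t (by linarith) (by linarith)
      (le_trans ((Psi_mono (n+1)).monotoneOn ⟨by nlinarith, by linarith⟩ ⟨by linarith, hη⟩
        (by linarith)) hh) ht (by nlinarith)
    rwa [show η - e - (1+e) * t = η - t - (e * t + e) by ring] at this
  rcases ht'.eq_or_lt with h0 | h0
  · rw [← h0, Psi_odd]; exact (abs_le.1 (hb _)).1
  have ht2 : Tendsto (fun e : ℝ => Psi (n+1) (η - t - (e * t + e)))
      (nhdsWithin 0 (Set.Ioi 0)) (nhds (Psi (n+1) (η - t))) := by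
    have : Continuous (fun e : ℝ => Psi (n+1) (η - t - (e * t + e))) :=
      (Psi_cont _).comp (by fun_prop)
    have := this.tendsto 0
    simp only [zero_mul, add_zero, sub_zero] at this
    exact this.mono_left nhdsWithin_le_nhds
  refine le_of_tendsto ht2 ?_
  have h2 : Tendsto (fun e : ℝ => e * t + e) (nhdsWithin 0 (Set.Ioi 0)) (nhds 0) := by
    have : Continuous (fun e : ℝ => e * t + e) := by fun_prop
    have := this.tendsto 0
    simp only [zero_mul, add_zero] at this
    exact this.mono_left nhdsWithin_le_nhds
  filter_upwards [h2.eventually (gt_mem_nhds (show (0:ℝ) < η - t + Real.pi/2 by linarith)),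
    self_mem_nhdsWithin] with e h3 h4
  exact lim e h4 h3.le

lemma Cmp_all (n : ℕ) : Cmp n := by
  induction n with
  | zero => exact Cmp_zero
  | succ n ih => exact Cmp_succ ih

lemma final_cmp {n : ℕ} {f : ℝ → ℝ} (hf : W n f) (hb : ∀ x, |f x| ≤ Psi n (Real.pi/2))
    {x y : ℝ} (hxy : f x = Psi n y) : |deriv f x| ≤ |deriv (Psi n) y| := by
  obtain ⟨z, hz1, hz2, hz3, hz4⟩ := Psi_red n y
  rw [hz4]; rw [hz3] at hxy
  rcases hz1.eq_or_lt with h1 | h1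
  · have : IsLocalMin f x := Filter.Eventually.of_forall fun w => by
      rw [hxy, ← h1, Psi_odd]; exact (abs_le.1 (hb w)).1
    rw [this.deriv_eq_zero]; simp
  rcases hz2.eq_or_lt with h2 | h2
  · have : IsLocalMax f x := Filter.Eventually.of_forall fun w => by
      rw [hxy, h2]; exact (abs_le.1 (hb w)).2
    rw [this.deriv_eq_zero]; simp
  cases n with
  | zero =>
    have : deriv (Psi 0) z = 1 := by
      have : Psi 0 =ᶠ[nhds z] id := by
        filter_upwards [Ioo_mem_nhds h1 h2] with w hw
        exact Psi_zero_lin hw.1.le hw.2.le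
      rw [this.deriv_eq]; simp
    rw [this, abs_one]
    exact deriv_abs_le_of_W0 hf x
  | succ n =>
    rw [(Psi_deriv n z).deriv, abs_of_pos (Psi_cpos n h1 h2), abs_le]
    refine ⟨E2 (Cmp_all n) hf hb h1 h2 hxy, ?_⟩
    have := E2 (Cmp_all n) (W_refl hf) (fun w => hb (-w)) (x := -x) h1 h2 (by simpa using hxy)
    rw [deriv_comp_neg, neg_neg] at this
    linarith

lemma lip_of_ae {f : ℝ → ℝ} {K : NNReal} (hf : LipschitzWith K f) {C : ℝ}
    (h : ∀ x, |deriv f x| ≤ C) (x y : ℝ) : |f x - f y| ≤ C * |x - y| := by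
  have := (hf.lipschitzOnWith (s := Set.uIcc y x)).absolutelyContinuousOnInterval
  rw [← this.integral_deriv_eq_sub]
  exact intervalIntegral.norm_integral_le_of_norm_le_const (f := deriv f) (C := C)
    (fun t _ => h t)

lemma W_of {n : ℕ} {f : ℝ → ℝ} (hf : ContDiff ℝ n f)
    (h : ∀ x y, |iteratedDeriv n f x - iteratedDeriv n f y| ≤ |x - y|) : W n f := by
  induction n generalizing f with
  | zero => simpa using! h
  | succ n ih =>
    have := contDiff_succ_iff_deriv.1 (show ContDiff ℝ ((n : WithTop ℕ∞) + 1) f by exact_mod_cast hf)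
    refine ⟨this.1, ih this.2.2 ?_⟩
    simpa only [iteratedDeriv_succ'] using h

lemma W_iter {n : ℕ} {f : ℝ → ℝ} (hf : W n f) (x : ℝ) : |iteratedDeriv (n+1) f x| ≤ 1 := by
  induction n generalizing f with
  | zero => rw [zero_add, iteratedDeriv_one]; exact deriv_abs_le_of_W0 hf x
  | succ n ih => rw [iteratedDeriv_succ']; exact ih hf.2

lemma W_p (n : ℕ) : W n (eulerPhi (n+1)) := by
  induction n with
  | zero =>
    intro x y
    rw [p_sub]
    have := intervalIntegral.norm_integral_le_of_norm_le_const (a := y) (b := x) (C := 1)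
      (f := eulerPhi 0) (fun t _ => sgn_bd (Real.sin t))
    simpa using this
  | succ n ih =>
    refine ⟨fun x => (p_deriv n x).differentiableAt, ?_⟩
    have : deriv (eulerPhi (n+2)) = eulerPhi (n+1) := funext fun x => (p_deriv n x).deriv
    rw [this]; exact ih

lemma p_eq (n : ℕ) : eulerPhi (n+1) = fun x => Psi n (x - (n+1) * (Real.pi/2)) := by
  funext x; unfold Psi; congr 1; ring

lemma L_eq (lam : ℝ) (n : ℕ) :
    eulerPhiL lam (n+1) = fun t => (lam⁻¹)^(n+1) * eulerPhi (n+1) (lam * t) := by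
  funext t
  unfold eulerPhiL
  rw [zpow_neg, zpow_natCast, inv_pow]

/-- **Kolmogorov's comparison theorem.** -/
theorem stmt3 (r : ℕ) (hr : 0 < r) (f : ℝ → ℝ) (hf : MemL r f) (a lam : ℝ)
    (ha : 0 < a) (hlam : 0 < lam)
    (h0 : M 0 f ≤ M 0 (fun t => a * eulerPhiL lam r t))
    (hrr : M r f ≤ M r (fun t => a * eulerPhiL lam r t))
    (ξ η : ℝ) (heq : f ξ = a * eulerPhiL lam r η) :
    |deriv f ξ| ≤ a * |deriv (eulerPhiL lam r) η| := by
  obtain ⟨n, rfl⟩ : ∃ n, r = n + 1 := ⟨r - 1, by omega⟩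
  obtain ⟨-, ⟨C, hC⟩, hcd, K, hK⟩ := hf
  simp only [Nat.add_sub_cancel] at hcd hK
  have hli : 0 < lam⁻¹ := inv_pos.2 hlam
  have hlp : 0 < (lam⁻¹)^(n+1) := pow_pos hli _
  have hB : ∀ t, |f t| ≤ a * ((lam⁻¹)^(n+1) * Psi n (Real.pi/2)) := by
    intro t
    have h1 : |f t| ≤ M 0 f := by
      unfold M unif
      simp only [iteratedDeriv_zero]
      exact le_ciSup (f := fun t => |f t|) ⟨C, by rintro _ ⟨y, rfl⟩; exact hC y⟩ t
    refine h1.trans (h0.trans ?_)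
    unfold M unif
    simp only [iteratedDeriv_zero]
    refine ciSup_le fun s => ?_
    rw [L_eq, p_eq, abs_mul, abs_of_pos ha, abs_mul, abs_of_pos hlp]
    exact mul_le_mul_of_nonneg_left (mul_le_mul_of_nonneg_left (Psi_le n _) hlp.le) ha.le
  have hR : ∀ t, |iteratedDeriv (n+1) f t| ≤ a := by
    intro t
    have h1 : |iteratedDeriv (n+1) f t| ≤ M (n+1) f := by
      unfold M unif
      refine le_ciSup (f := fun t => |iteratedDeriv (n+1) f t|) ⟨K, ?_⟩ t
      rintro _ ⟨y, rfl⟩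
      simp only [iteratedDeriv_succ]
      exact norm_deriv_le_of_lipschitz hK
    refine h1.trans (hrr.trans ?_)
    unfold M unif
    refine ciSup_le fun s => ?_
    rw [iteratedDeriv_const_mul_field, abs_mul, abs_of_pos ha, L_eq]
    have := W_iter (W_scale (W_p n) hlam) s
    exact mul_le_of_le_one_right ha.le this
  have hW0 : W n (fun x => a⁻¹ * f x) := by
    refine W_of (contDiff_const.mul hcd) fun x y => ?_
    rw [iteratedDeriv_const_mul_field, iteratedDeriv_const_mul_field, ← mul_sub, abs_mul,
      abs_of_pos (inv_pos.2 ha), inv_mul_le_iff₀ ha]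
    refine lip_of_ae hK (fun t => ?_) x y
    rw [← iteratedDeriv_succ]; exact hR t
  have hW := W_scale hW0 hli
  have key := final_cmp hW (x := lam * ξ) (y := lam * η - (n+1) * (Real.pi/2)) (fun x => by
      rw [abs_mul, abs_mul, abs_of_pos (inv_pos.2 ha), inv_inv, abs_of_pos (pow_pos hlam _)]
      have := hB (lam⁻¹ * x)
      rw [← inv_mul_le_iff₀ ha, inv_pow, ← inv_mul_le_iff₀ (inv_pos.2 (pow_pos hlam _)),
        inv_inv] at this
      exact this)
    (by
      have : Psi n (lam * η - (n+1) * (Real.pi/2)) = eulerPhi (n+1) (lam * η) := by rw [p_eq]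
      rw [this, inv_mul_cancel_left₀ hlam.ne', heq, L_eq, inv_mul_cancel_left₀ ha.ne', inv_inv,
        ← mul_assoc, ← mul_pow, mul_inv_cancel₀ hlam.ne', one_pow, one_mul])
  have hdp : deriv (Psi n) (lam * η - (n+1) * (Real.pi/2)) = deriv (eulerPhi (n+1)) (lam * η) := by
    rw [p_eq, deriv_comp_sub_const]
  rw [hdp, deriv_const_mul_field, deriv_comp_mul_left (lam⁻¹) (fun x => a⁻¹ * f x),
    deriv_const_mul_field, inv_mul_cancel_left₀ hlam.ne', inv_inv, smul_eq_mul, abs_mul, abs_mul,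
    abs_mul, abs_of_pos hli, abs_of_pos (inv_pos.2 ha), abs_of_pos (pow_pos hlam _)] at key
  rw [L_eq, deriv_const_mul_field, deriv_comp_mul_left, smul_eq_mul, abs_mul, abs_mul,
    abs_of_pos hlp, abs_of_pos hlam]
  have h2 := mul_le_mul_of_nonneg_left key (show 0 ≤ a * ((lam⁻¹)^(n+1) * lam) by positivity)
  calc |deriv f ξ| = a * (lam⁻¹ ^ (n + 1) * lam) * (lam ^ (n + 1) * (lam⁻¹ * (a⁻¹ * |deriv f ξ|))) := by
        rw [inv_pow]; field_simp
    _ ≤ _ := h2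
    _ = _ := by ring
end

section
/- Let a ≥ 0 and b > 0. Then the uniform norm on ℝ satisfies ‖ψ_3(a,b,0)‖ = |∫_0^{a+b} ψ_2(a,b,0;t) dt| = a²b/2 + ab² + b³/3. -/
open MeasureTheory Filter

theorem psiHalf_symm (a b t : ℝ) (hb : 0 < b) :
    psiHalf a b 0 (2 * (a + b) - t) = psiHalf a b 0 t := by
  unfold psiHalf
  rcases lt_trichotomy t (a + b) with h | h | h
  · rw [if_neg (by linarith), if_pos (by linarith)]
    congr 1; ring
  · subst h
    rw [if_pos (by linarith), if_pos (by linarith)]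
    congr 1; ring
  · rw [if_pos (by linarith), if_neg (by linarith)]
    congr 1; ring

theorem psiHalf_zero (a b : ℝ) (ha : 0 ≤ a) (hb : 0 < b) : psiHalf a b 0 0 = 0 := by
  unfold psiHalf psiBase
  rw [if_pos (by linarith), if_pos ha]

theorem psiHalf_two (a b : ℝ) (ha : 0 ≤ a) (hb : 0 < b) : psiHalf a b 0 (2 * (a + b)) = 0 := by
  have := psiHalf_symm a b 0 hb
  rw [psiHalf_zero a b ha hb, sub_zero] at this
  exact this

theorem psiZero_eq (a b t r : ℝ) (n : ℤ) (hL : 0 < a + b) (h0 : 0 ≤ r) (h1 : r < 4 * (a + b))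
    (h : t = 4 * (a + b) * n + r) :
    psiZero a b 0 t = if r ≤ 2 * (a + b) then psiHalf a b 0 r
      else -psiHalf a b 0 (4 * (a + b) - r) := by
  have hf : ⌊t / (4 * (a + b))⌋ = n := by
    rw [Int.floor_eq_iff]
    constructor
    · rw [le_div_iff₀ (by linarith)]; linarith
    · rw [div_lt_iff₀ (by linarith)]; linarith
  have hr : t - 4 * (a + b) * (n : ℝ) = r := by linarith
  unfold psiZero
  simp only [add_zero, hf, hr]

theorem psiZero_anti (a b : ℝ) (ha : 0 ≤ a) (hb : 0 < b) :
    Function.Antiperiodic (psiZero a b 0) (2 * (a + b)) := by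
  intro t
  have hL : 0 < a + b := by linarith
  have hL4 : 0 < 4 * (a + b) := by linarith
  obtain ⟨n, hn⟩ : ∃ n : ℤ, n = ⌊t / (4 * (a + b))⌋ := ⟨_, rfl⟩
  obtain ⟨r, hr⟩ : ∃ r : ℝ, t = 4 * (a + b) * n + r := ⟨t - 4 * (a + b) * n, by ring⟩
  have h1 := hn.symm
  rw [Int.floor_eq_iff, le_div_iff₀ hL4, div_lt_iff₀ hL4] at h1
  have h0 : 0 ≤ r := by linarith
  have h4 : r < 4 * (a + b) := by linarith
  rw [psiZero_eq a b t r n hL h0 h4 hr]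
  rcases lt_or_ge r (2 * (a + b)) with h | h
  · rw [psiZero_eq a b (t + 2 * (a + b)) (r + 2 * (a + b)) n hL (by linarith) (by linarith)
      (by linarith), if_pos h.le]
    rcases h0.eq_or_lt with h0 | h0
    · subst h0
      rw [if_pos (by linarith), zero_add, psiHalf_two a b ha hb, psiHalf_zero a b ha hb, neg_zero]
    · rw [if_neg (by linarith), ← psiHalf_symm a b r hb]
      congr 2; ring
  · rw [psiZero_eq a b (t + 2 * (a + b)) (r - 2 * (a + b)) (n + 1) hL (by linarith) (by linarith)
      (by push_cast; linarith), if_pos (by linarith)]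
    rcases h.eq_or_lt with h | h
    · subst h
      rw [if_pos le_rfl, sub_self, psiHalf_two a b ha hb, psiHalf_zero a b ha hb, neg_zero]
    · rw [if_neg (by linarith), ← psiHalf_symm a b (r - _) hb, neg_neg]
      congr 1; ring

theorem psiBase_meas (a b : ℝ) : Measurable (psiBase a b) := by
  unfold psiBase
  exact Measurable.ite measurableSet_Iic measurable_const
    (Measurable.ite measurableSet_Iic measurable_const measurable_const)

theorem psiHalf_meas (a b c : ℝ) : Measurable (psiHalf a b c) := by
  unfold psiHalf
  exact Measurable.ite measurableSet_Iic (psiBase_meas a b)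
    ((psiBase_meas a b).comp (by fun_prop))

theorem psiZero_meas (a b c : ℝ) : Measurable (psiZero a b c) := by
  have h : Measurable (fun t : ℝ => t - 4 * (a + b + c) * (⌊t / (4 * (a + b + c))⌋ : ℝ)) := by
    have : Measurable (fun t : ℝ => (⌊t / (4 * (a + b + c))⌋ : ℝ)) :=
      (measurable_from_top (f := fun n : ℤ => (n : ℝ))).comp
        (Int.measurable_floor.comp (by fun_prop))
    fun_prop
  unfold psiZero
  refine Measurable.ite (measurableSet_le h measurable_const) ((psiHalf_meas a b c).comp h) ?_
  exact ((psiHalf_meas a b c).comp (measurable_const.sub h)).neg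

theorem psiZero_int (a b c x y : ℝ) : IntervalIntegrable (psiZero a b c) volume x y := by
  refine (intervalIntegrable_const (c := (1:ℝ))).mono_fun
    (psiZero_meas a b c).aestronglyMeasurable (Eventually.of_forall fun t => ?_)
  unfold psiZero psiHalf psiBase
  beta_reduce
  split_ifs <;> simp

theorem psi_succ (a b : ℝ) (hL : 0 < a + b) (s : ℕ)
    (hi : ∀ x y, IntervalIntegrable (psi s a b 0) volume x y)
    (hp : Function.Antiperiodic (psi s a b 0) (2 * (a + b))) :
    (∀ t, psi (s + 1) a b 0 t = (∫ x in (0:ℝ)..t, psi s a b 0 x)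
      - (∫ x in (0:ℝ)..(2 * (a + b)), psi s a b 0 x) / 2) ∧
    (∀ x y, IntervalIntegrable (psi (s + 1) a b 0) volume x y) ∧
    Function.Antiperiodic (psi (s + 1) a b 0) (2 * (a + b)) := by
  obtain ⟨G, hG⟩ : ∃ G : ℝ → ℝ, G = fun t => ∫ x in (0:ℝ)..t, psi s a b 0 x := ⟨_, rfl⟩
  have hGt : ∀ t, (∫ x in (0:ℝ)..t, psi s a b 0 x) = G t := fun t => by rw [hG]
  have hGc : Continuous G := by
    rw [hG]; exact intervalIntegral.continuous_primitive hi 0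
  have hGa : ∀ t, G (t + 2 * (a + b)) = G (2 * (a + b)) - G t := by
    intro t
    have h1 := intervalIntegral.integral_add_adjacent_intervals (hi 0 (2 * (a + b)))
      (hi (2 * (a + b)) (t + 2 * (a + b)))
    have h2 := intervalIntegral.integral_comp_add_right (a := 0) (b := t) (psi s a b 0)
      (2 * (a + b))
    rw [zero_add] at h2
    rw [← h2] at h1
    simp only [hp _, intervalIntegral.integral_neg, hGt] at h1
    linarith
  have hm : (∫ x in (0:ℝ)..(4 * (a + b)), G x) = 2 * (a + b) * G (2 * (a + b)) := by
    have h1 := intervalIntegral.integral_add_adjacent_intervals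
      (hGc.intervalIntegrable (μ := volume) 0 (2 * (a + b)))
      (hGc.intervalIntegrable (μ := volume) (2 * (a + b)) (4 * (a + b)))
    have h2 := intervalIntegral.integral_comp_add_right (a := 0) (b := 2 * (a + b)) G
      (2 * (a + b))
    rw [zero_add, show 2 * (a + b) + 2 * (a + b) = 4 * (a + b) by ring] at h2
    rw [← h2] at h1
    simp only [hGa] at h1
    rw [intervalIntegral.integral_sub intervalIntegrable_const (hGc.intervalIntegrable _ _),
      intervalIntegral.integral_const, smul_eq_mul] at h1
    linarith
  have hf : ∀ t, psi (s + 1) a b 0 t = G t - G (2 * (a + b)) / 2 := by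
    intro t
    have : psi (s + 1) a b 0 t = (∫ x in (0:ℝ)..t, psi s a b 0 x) -
        (1 / (4 * (a + b + 0))) *
          ∫ x in (0:ℝ)..(4 * (a + b + 0)), ∫ u in (0:ℝ)..x, psi s a b 0 u := rfl
    rw [this]
    simp only [hGt, add_zero, hm]
    field_simp
    ring
  refine ⟨fun t => by rw [hf, hGt, hGt], fun x y => ?_, fun t => ?_⟩
  · have : psi (s + 1) a b 0 = fun t => G t - G (2 * (a + b)) / 2 := funext hf
    rw [this]
    exact (hGc.sub continuous_const).intervalIntegrable _ _
  · rw [hf, hf, hGa]; ring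

theorem trunc_deriv (n : ℕ) (c x : ℝ) (hx : x ≠ c) :
    HasDerivAt (fun t => (max (t - c) 0) ^ (n + 2) / (n + 2 : ℝ)) ((max (x - c) 0) ^ (n + 1)) x := by
  rcases lt_or_gt_of_ne hx with h | h
  · rw [max_eq_right (by linarith)]
    refine HasDerivAt.congr_of_eventuallyEq (f := fun _ => (0:ℝ)) ?_ ?_
    · simpa using hasDerivAt_const x (0:ℝ)
    · filter_upwards [Iio_mem_nhds h] with t ht
      rw [max_eq_right (by linarith [Set.mem_Iio.1 ht])]; simp
  · rw [max_eq_left (by linarith)]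
    refine HasDerivAt.congr_of_eventuallyEq
      (f := fun t => (t - c) ^ (n + 2) / (n + 2 : ℝ)) ?_ ?_
    · have := (((hasDerivAt_id x).sub_const c).pow (n + 2)).div_const (n + 2 : ℝ)
      refine this.congr_deriv ?_
      have : (n + 2 : ℝ) ≠ 0 := by positivity
      simp; field_simp
    · filter_upwards [Ioi_mem_nhds h] with t ht
      rw [max_eq_left (by linarith [Set.mem_Ioi.1 ht])]

theorem trunc_deriv0 (c x : ℝ) (hx : x ≠ c) :
    HasDerivAt (fun t => max (t - c) 0) (if x ≤ c then 0 else 1) x := by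
  rcases lt_or_gt_of_ne hx with h | h
  · rw [if_pos h.le]
    refine HasDerivAt.congr_of_eventuallyEq (hasDerivAt_const x (0:ℝ)) ?_
    filter_upwards [Iio_mem_nhds h] with t ht
    rw [max_eq_right (by linarith [Set.mem_Iio.1 ht])]
  · rw [if_neg (by linarith)]
    refine HasDerivAt.congr_of_eventuallyEq ((hasDerivAt_id x).sub_const c) ?_
    filter_upwards [Ioi_mem_nhds h] with t ht
    rw [max_eq_left (by linarith [Set.mem_Ioi.1 ht])]; rfl

theorem ftc_aux (f g : ℝ → ℝ) (p q T t : ℝ) (ht : t ∈ Set.Icc 0 T) (hf : Continuous f)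
    (hi : ∀ x y, IntervalIntegrable g volume x y)
    (hd : ∀ x ∈ Set.Ioo 0 T, x ≠ p → x ≠ q → HasDerivAt f (g x) x) :
    ∫ x in (0:ℝ)..t, g x = f t - f 0 := by
  refine MeasureTheory.integral_eq_of_hasDerivAt_off_countable f g (s := {p, q})
    (by simp) hf.continuousOn (fun x hx => ?_) (hi _ _)
  rw [min_eq_left ht.1, max_eq_right ht.1] at hx
  have h2 := hx.2
  simp only [Set.mem_insert_iff, Set.mem_singleton_iff, not_or] at h2
  exact hd x ⟨hx.1.1, hx.1.2.trans_le ht.2⟩ h2.1 h2.2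

/-- `‖ψ_3(a,b,0)‖ = |∫_0^{a+b} ψ_2(a,b,0;t) dt| = a²b/2 + ab² + b³/3`. -/
theorem stmt10 (a b : ℝ) (ha : 0 ≤ a) (hb : 0 < b) :
    unif (psi 3 a b 0) = |∫ t in (0:ℝ)..(a + b), psi 2 a b 0 t| ∧
    unif (psi 3 a b 0) = a ^ 2 * b / 2 + a * b ^ 2 + b ^ 3 / 3 := by
  have hL : 0 < a + b := by linarith
  have hi0 : ∀ x y, IntervalIntegrable (psi 0 a b 0) volume x y := psiZero_int a b 0
  have hp0 : Function.Antiperiodic (psi 0 a b 0) (2 * (a + b)) := psiZero_anti a b ha hb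
  obtain ⟨f1, hi1, hp1⟩ := psi_succ a b hL 0 hi0 hp0
  obtain ⟨f2, hi2, hp2⟩ := psi_succ a b hL 1 hi1 hp1
  obtain ⟨f3, hi3, hp3⟩ := psi_succ a b hL 2 hi2 hp2
  norm_num only [Nat.reduceAdd] at f1 hi1 hp1 f2 hi2 hp2 f3 hi3 hp3
  have m0 : max (0 - a) 0 = 0 := max_eq_right (by linarith)
  have m0' : max (0 - (a + 2 * b)) 0 = 0 := max_eq_right (by linarith)
  have mL : max ((a + b) - a) 0 = b := by rw [max_eq_left (by linarith)]; ring
  have mL' : max ((a + b) - (a + 2 * b)) 0 = 0 := max_eq_right (by linarith)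
  have m2 : max (2 * (a + b) - a) 0 = a + 2 * b := by rw [max_eq_left (by linarith)]; ring
  have m2' : max (2 * (a + b) - (a + 2 * b)) 0 = a := by rw [max_eq_left (by linarith)]; ring
  have hT : 2 * (a + b) ∈ Set.Icc 0 (2 * (a + b)) := ⟨by linarith, le_rfl⟩
  have hLm : (a + b) ∈ Set.Icc 0 (2 * (a + b)) := ⟨by linarith, by linarith⟩
  have I0 : ∀ t ∈ Set.Icc 0 (2 * (a + b)), ∫ x in (0:ℝ)..t, psi 0 a b 0 x
      = max (t - a) 0 - max (t - (a + 2 * b)) 0 := by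
    intro t ht
    rw [ftc_aux (fun t => max (t - a) 0 - max (t - (a + 2 * b)) 0) _ a (a + 2 * b) _ t ht
      (by fun_prop) hi0]
    · simp only [m0, m0']; ring
    · intro x hx h1 h2
      refine ((trunc_deriv0 a x h1).sub (trunc_deriv0 (a + 2 * b) x h2)).congr_deriv ?_
      change _ = psiZero a b 0 x
      rw [psiZero_eq a b x x 0 hL hx.1.le (by linarith [hx.2]) (by simp), if_pos hx.2.le]
      unfold psiHalf psiBase
      have h2' := lt_or_gt_of_ne h2
      split_ifs <;> first | (exfalso; rcases h2' with h | h <;> linarith) | norm_num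
  have P1 : ∀ t ∈ Set.Icc 0 (2 * (a + b)), psi 1 a b 0 t
      = max (t - a) 0 - max (t - (a + 2 * b)) 0 - b := by
    intro t ht
    rw [f1, I0 t ht, I0 _ hT, m2, m2']; ring
  have I1 : ∀ t ∈ Set.Icc 0 (2 * (a + b)), ∫ x in (0:ℝ)..t, psi 1 a b 0 x
      = max (t - a) 0 ^ 2 / 2 - max (t - (a + 2 * b)) 0 ^ 2 / 2 - b * t := by
    intro t ht
    rw [ftc_aux (fun t => max (t - a) 0 ^ 2 / 2 - max (t - (a + 2 * b)) 0 ^ 2 / 2 - b * t) _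
      a (a + 2 * b) _ t ht (by fun_prop) hi1]
    · simp only [m0, m0']; ring
    · intro x hx h1 h2
      rw [P1 x ⟨hx.1.le, hx.2.le⟩]
      have e1 := trunc_deriv 0 a x h1
      have e2 := trunc_deriv 0 (a + 2 * b) x h2
      norm_num at e1 e2
      refine ((e1.sub e2).sub ((hasDerivAt_id x).const_mul b)).congr_deriv ?_
      ring
  have P2 : ∀ t ∈ Set.Icc 0 (2 * (a + b)), psi 2 a b 0 t
      = max (t - a) 0 ^ 2 / 2 - max (t - (a + 2 * b)) 0 ^ 2 / 2 - b * t := by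
    intro t ht
    rw [f2, I1 t ht, I1 _ hT, m2, m2']; ring
  have I2 : ∀ t ∈ Set.Icc 0 (2 * (a + b)), ∫ x in (0:ℝ)..t, psi 2 a b 0 x
      = max (t - a) 0 ^ 3 / 6 - max (t - (a + 2 * b)) 0 ^ 3 / 6 - b * t ^ 2 / 2 := by
    intro t ht
    rw [ftc_aux (fun t => max (t - a) 0 ^ 3 / 6 - max (t - (a + 2 * b)) 0 ^ 3 / 6
      - b * t ^ 2 / 2) _ a (a + 2 * b) _ t ht (by fun_prop) hi2]
    · simp only [m0, m0']; ring
    · intro x hx h1 h2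
      rw [P2 x ⟨hx.1.le, hx.2.le⟩]
      have e1 := (trunc_deriv 1 a x h1).div_const 2
      have e2 := (trunc_deriv 1 (a + 2 * b) x h2).div_const 2
      have e3 := (((hasDerivAt_id x).pow 2).const_mul (b / 2))
      refine (((e1.sub e2).sub e3).congr_deriv ?_).congr_of_eventuallyEq
        (Eventually.of_forall fun t => ?_)
      · norm_num; ring
      · simp; ring
  have N2 : ∀ t ∈ Set.Icc 0 (2 * (a + b)), psi 2 a b 0 t ≤ 0 := by
    intro t ht
    rw [P2 t ht]
    obtain ⟨h0, h1⟩ := ht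
    rcases le_total t a with h | h
    · rw [max_eq_right (by linarith), max_eq_right (by linarith)]
      nlinarith
    · rcases le_total t (a + 2 * b) with h' | h'
      · rw [max_eq_left (by linarith), max_eq_right (by linarith)]
        nlinarith [mul_nonneg (sub_nonneg.2 h) (sub_nonneg.2 h'), mul_nonneg ha hb.le]
      · rw [max_eq_left (by linarith), max_eq_left (by linarith)]
        nlinarith [mul_nonneg hb.le (sub_nonneg.2 h1)]
  have I2T : ∫ x in (0:ℝ)..(2 * (a + b)), psi 2 a b 0 x
      = -2 * (a ^ 2 * b / 2 + a * b ^ 2 + b ^ 3 / 3) := by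
    rw [I2 _ hT, m2, m2']; ring
  have I2L : ∫ x in (0:ℝ)..(a + b), psi 2 a b 0 x
      = -(a ^ 2 * b / 2 + a * b ^ 2 + b ^ 3 / 3) := by
    rw [I2 _ hLm, mL, mL']; ring
  have hB : 0 ≤ a ^ 2 * b / 2 + a * b ^ 2 + b ^ 3 / 3 := by positivity
  have bd : ∀ t ∈ Set.Icc 0 (2 * (a + b)),
      |psi 3 a b 0 t| ≤ a ^ 2 * b / 2 + a * b ^ 2 + b ^ 3 / 3 := by
    intro t ht
    have k := intervalIntegral.integral_add_adjacent_intervals (hi2 0 t) (hi2 t (2 * (a + b)))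
    have k1 : ∫ x in (0:ℝ)..t, psi 2 a b 0 x ≤ 0 := by
      have := intervalIntegral.integral_mono_on ht.1 (hi2 0 t)
        (intervalIntegrable_const (c := (0:ℝ))) (fun x hx => N2 x ⟨hx.1, hx.2.trans ht.2⟩)
      simpa using this
    have k2 : ∫ x in t..(2 * (a + b)), psi 2 a b 0 x ≤ 0 := by
      have := intervalIntegral.integral_mono_on ht.2 (hi2 t _)
        (intervalIntegrable_const (c := (0:ℝ))) (fun x hx => N2 x ⟨ht.1.trans hx.1, hx.2⟩)
      simpa using this
    rw [f3, I2T, abs_le]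
    constructor <;> linarith
  have bd' : ∀ t, |psi 3 a b 0 t| ≤ a ^ 2 * b / 2 + a * b ^ 2 + b ^ 3 / 3 := by
    intro t
    have hper : Function.Periodic (fun t => |psi 3 a b 0 t|) (2 * (a + b)) := by
      intro t
      simp only [hp3 t, abs_neg]
    obtain ⟨y, hy, he⟩ := hper.exists_mem_Ico₀ (by linarith) t
    rw [he]
    exact bd y ⟨hy.1, hy.2.le⟩
  have h0 : |psi 3 a b 0 0| = a ^ 2 * b / 2 + a * b ^ 2 + b ^ 3 / 3 := by
    rw [f3, I2T, intervalIntegral.integral_same, abs_of_nonneg (by linarith)]; ring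
  have main : unif (psi 3 a b 0) = a ^ 2 * b / 2 + a * b ^ 2 + b ^ 3 / 3 := by
    unfold unif
    apply le_antisymm (ciSup_le bd')
    rw [← h0]
    exact le_ciSup (f := fun t => |psi 3 a b 0 t|) ⟨_, by rintro _ ⟨t, rfl⟩; exact bd' t⟩ 0
  refine ⟨?_, main⟩
  rw [main, I2L, abs_neg, abs_of_nonneg hB]
end
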